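/- The binary [5,3,2] code C with generator matrix rows (1,0,0,1,0), (0,1,0,1,0), (0,0,1,0,1) has second generalized Hamming weight d_2^C = 3 < (5/3)·2; hence no PIR achievable rate matrix Λ_{κ,ν} with κ/ν = 3/5 exists for C. -/

import Mathlib

/-- `I` is an information set of the `[n,k]` code `C`: it has size `k` and a codeword
vanishing on `I` is zero (so the projection of `C` onto the coordinates in `I` is a
bijection onto `F^I`). -/
def IsInfoSet {F : Type*} [Field F] {n : ℕ} (C : Submodule F (Fin n → F)) (k : ℕ)
    (I : Finset (Fin n)) : Prop :=
  I.card = k ∧ ∀ x ∈ C, (∀ j ∈ I, x j = 0) → x = 0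

/-- `Λ` is a PIR achievable rate matrix for the `[n,k]` code `C`: every column has
Hamming weight `κ` and the support of every row contains an information set. -/
def IsPIRMatrix {F : Type*} [Field F] {n ν : ℕ} (C : Submodule F (Fin n → F))
    (k κ : ℕ) (Λ : Fin ν → Fin n → Bool) : Prop :=
  (∀ j, (Finset.univ.filter fun u => Λ u j = true).card = κ) ∧
  ∀ u, ∃ I : Finset (Fin n), (∀ j ∈ I, Λ u j = true) ∧ IsInfoSet C k I

/-- The `s`-th generalized Hamming weight of the code `C`: the smallest support size of
an `s`-dimensional subcode of `C`. -/
noncomputable def genHammingWeight {F : Type*} [Field F] {n : ℕ}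
    (C : Submodule F (Fin n → F)) (s : ℕ) : ℕ :=
  sInf {c | ∃ D : Submodule F (Fin n → F), D ≤ C ∧ Module.finrank F D = s ∧
    c = Set.ncard {j | ∃ x ∈ D, x j ≠ 0}}

/-!
A codeword of a subcode `D` that vanishes on `I ∩ supp D`, for an information set `I`, vanishes on
all of `I` and so is zero; hence `dim D ≤ |I ∩ supp D|`. Summing this over the rows of a PIR
achievable rate matrix, and counting the ones in the columns of `supp D` as `κ |supp D|`, gives
`ν s ≤ κ d_s`, which for `κ / ν = k / n` is the necessary condition `d_s ≥ (n / k) s`. For the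
`[5,3,2]` code, `d_2 = 3` forces `κ / ν ≥ 2 / 3 > 3 / 5`. The lower bound `d_2 ≥ 3` comes from
Wei's strict monotonicity `d_1 < d_2` and the minimum distance `d_1 ≥ 2`.
-/

section Support

variable {F ι : Type*} [Field F]

/-- The support of a linear code: the coordinates at which some codeword is nonzero. This is the
set whose size `genHammingWeight` minimizes over subcodes. -/
def codeSupport (D : Submodule F (ι → F)) : Set ι :=
  {j | ∃ x ∈ D, x j ≠ 0}

/-- The code `D` shortened at the coordinate `j`: the subcode of codewords vanishing at `j`. The
coordinate `j` is kept, so that the result is still a subcode of `D`. -/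
def shortenedCode (D : Submodule F (ι → F)) (j : ι) : Submodule F (ι → F) :=
  D ⊓ LinearMap.ker (LinearMap.proj j)

theorem codeSupport_span_subset {S : Set (ι → F)} {T : Set ι}
    (h : ∀ x ∈ S, Function.support x ⊆ T) : codeSupport (Submodule.span F S) ⊆ T := by
  rintro j ⟨x, hx, hxj⟩
  by_contra hj
  have hle : Submodule.span F S ≤ LinearMap.ker (LinearMap.proj j) :=
    Submodule.span_le.2 fun y hy => Function.notMem_support.1 fun hyj => hj (h y hy hyj)
  exact hxj (hle hx)

theorem finrank_le_card_of_forall_eq_zero {D : Submodule F (ι → F)} (S : Finset ι)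
    (h : ∀ x ∈ D, (∀ j ∈ S, x j = 0) → x = 0) : Module.finrank F D ≤ S.card := by
  let restriction : D →ₗ[F] (S → F) := LinearMap.funLeft F F Subtype.val ∘ₗ D.subtype
  have restriction_injective : Function.Injective restriction :=
    (injective_iff_map_eq_zero restriction).2 fun x hx =>
      Subtype.ext (h x x.2 fun j hj => congrFun hx ⟨j, hj⟩)
  simpa using LinearMap.finrank_le_finrank_of_injective restriction_injective

theorem finrank_shortenedCode_add_one {D : Submodule F (ι → F)} [FiniteDimensional F D] {j : ι}
    (hj : j ∈ codeSupport D) :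
    Module.finrank F (shortenedCode D j) + 1 = Module.finrank F D := by
  obtain ⟨x, hx, hxj⟩ := hj
  let coord : Module.Dual F D := LinearMap.proj j ∘ₗ D.subtype
  have coord_ne_zero : coord ≠ 0 := fun h => hxj (LinearMap.congr_fun h ⟨x, hx⟩)
  rw [← Module.Dual.finrank_ker_add_one_of_ne_zero coord_ne_zero, LinearMap.ker_comp,
    ← Submodule.finrank_map_subtype_eq, Submodule.map_comap_subtype, shortenedCode]

theorem codeSupport_shortenedCode_subset (D : Submodule F (ι → F)) (j : ι) :
    codeSupport (shortenedCode D j) ⊆ codeSupport D \ {j} := by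
  rintro i ⟨x, ⟨hxD, hxj⟩, hxi⟩
  refine ⟨⟨x, hxD, hxi⟩, ?_⟩
  rintro rfl
  exact hxi hxj

theorem hammingNorm_le_ncard_codeSupport [Fintype ι] [DecidableEq F] {D : Submodule F (ι → F)}
    {x : ι → F} (hx : x ∈ D) : hammingNorm x ≤ (codeSupport D).ncard := by
  rw [hammingNorm, ← Set.ncard_coe_finset]
  exact Set.ncard_le_ncard fun j hj => ⟨x, hx, (Finset.mem_filter.1 hj).2⟩

end Support

theorem exists_submodule_le_finrank_eq {R M : Type*} [Ring R] [StrongRankCondition R]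
    [AddCommGroup M] [Module R M] {N : Submodule R M} {s : ℕ} (hs : s ≤ Module.finrank R N) :
    ∃ P ≤ N, Module.finrank R P = s := by
  obtain ⟨b, rfl, hb⟩ := exists_finset_linearIndependent_of_le_finrank hs
  refine ⟨(Submodule.span R (b : Set N)).map N.subtype, Submodule.map_subtype_le N _, ?_⟩
  rw [Submodule.finrank_map_subtype_eq, finrank_span_finset_eq_card hb]

section GenHammingWeight

variable {F : Type*} [Field F] {n s : ℕ} {C D : Submodule F (Fin n → F)}

theorem genHammingWeight_le_ncard_codeSupport (hD : D ≤ C) :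
    genHammingWeight C (Module.finrank F D) ≤ (codeSupport D).ncard :=
  Nat.sInf_le ⟨D, hD, rfl, rfl⟩

-- For `s > dim C` the infimum is over the empty set and takes the junk value `0`.
theorem exists_ncard_codeSupport_eq_genHammingWeight (hs : s ≤ Module.finrank F C) :
    ∃ D ≤ C, Module.finrank F D = s ∧ (codeSupport D).ncard = genHammingWeight C s := by
  obtain ⟨D₀, hD₀, hrank₀⟩ := exists_submodule_le_finrank_eq hs
  obtain ⟨D, hD, hrank, hcard⟩ := Nat.sInf_mem (s := {c | ∃ D : Submodule F (Fin n → F),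
    D ≤ C ∧ Module.finrank F D = s ∧ c = (codeSupport D).ncard}) ⟨_, D₀, hD₀, hrank₀, rfl⟩
  exact ⟨D, hD, hrank, hcard.symm⟩

theorem genHammingWeight_lt_succ (hs : s + 1 ≤ Module.finrank F C) :
    genHammingWeight C s < genHammingWeight C (s + 1) := by
  obtain ⟨D, hD, hrank, hcard⟩ := exists_ncard_codeSupport_eq_genHammingWeight hs
  obtain ⟨x, hxD, hx⟩ := D.exists_mem_ne_zero_of_ne_bot <|
    Submodule.one_le_finrank_iff.1 ((Nat.le_add_left 1 s).trans_eq hrank.symm)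
  obtain ⟨j, hxj⟩ := Function.ne_iff.1 hx
  have hj : j ∈ codeSupport D := ⟨x, hxD, hxj⟩
  have hrank' : Module.finrank F (shortenedCode D j) = s :=
    Nat.succ_injective ((finrank_shortenedCode_add_one hj).trans hrank)
  calc genHammingWeight C s
      ≤ (codeSupport (shortenedCode D j)).ncard :=
        hrank' ▸ genHammingWeight_le_ncard_codeSupport (inf_le_left.trans hD)
    _ ≤ (codeSupport D \ {j}).ncard :=
        Set.ncard_le_ncard (codeSupport_shortenedCode_subset D j)
    _ < (codeSupport D).ncard := Set.ncard_sdiff_singleton_lt_of_mem hj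
    _ = genHammingWeight C (s + 1) := hcard

theorem le_genHammingWeight_one [DecidableEq F] {d : ℕ} (hC : C ≠ ⊥)
    (h : ∀ x ∈ C, x ≠ 0 → d ≤ hammingNorm x) : d ≤ genHammingWeight C 1 := by
  have one_le_finrank : 1 ≤ Module.finrank F C := Submodule.one_le_finrank_iff.2 hC
  obtain ⟨D, hD, hrank, hcard⟩ := exists_ncard_codeSupport_eq_genHammingWeight one_le_finrank
  obtain ⟨x, hxD, hx⟩ := D.exists_mem_ne_zero_of_ne_bot (Submodule.one_le_finrank_iff.1 hrank.ge)
  exact hcard ▸ (h x (hD hxD) hx).trans (hammingNorm_le_ncard_codeSupport hxD)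

end GenHammingWeight

section PIRMatrix

variable {F : Type*} [Field F] {n k : ℕ} {C D : Submodule F (Fin n → F)}

open Classical in
theorem IsInfoSet.finrank_le_card_filter_codeSupport {I : Finset (Fin n)} (hI : IsInfoSet C k I)
    (hD : D ≤ C) : Module.finrank F D ≤ (I.filter (· ∈ codeSupport D)).card := by
  refine finrank_le_card_of_forall_eq_zero _ fun x hx hzero => hI.2 x (hD hx) fun j hj => ?_
  by_contra hxj
  exact hxj (hzero j (Finset.mem_filter.2 ⟨hj, x, hx, hxj⟩))

theorem IsPIRMatrix.mul_finrank_le_mul_ncard_codeSupport {ν κ : ℕ} {Λ : Fin ν → Fin n → Bool}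
    (hΛ : IsPIRMatrix C k κ Λ) (hD : D ≤ C) :
    ν * Module.finrank F D ≤ κ * (codeSupport D).ncard := by
  classical
  obtain ⟨hcol, hrow⟩ := hΛ
  have row_bound (u : Fin ν) : Module.finrank F D ≤
      ((codeSupport D).toFinset.filter fun j => Λ u j = true).card := by
    obtain ⟨I, hIΛ, hI⟩ := hrow u
    refine (hI.finrank_le_card_filter_codeSupport hD).trans (Finset.card_le_card fun j hj => ?_)
    obtain ⟨hjI, hjD⟩ := Finset.mem_filter.1 hj
    exact Finset.mem_filter.2 ⟨Set.mem_toFinset.2 hjD, hIΛ j hjI⟩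
  have double_count := Finset.card_mul_le_card_mul (s := Finset.univ)
    (t := (codeSupport D).toFinset) (fun u j => Λ u j = true) (fun u _ => row_bound u)
    fun j _ => (hcol j).le
  rwa [Finset.card_univ, Fintype.card_fin, ← Set.ncard_eq_toFinset_card', mul_comm _ κ]
    at double_count

theorem IsPIRMatrix.mul_le_mul_genHammingWeight {ν κ s : ℕ} {Λ : Fin ν → Fin n → Bool}
    (hΛ : IsPIRMatrix C k κ Λ) (hs : s ≤ Module.finrank F C) :
    ν * s ≤ κ * genHammingWeight C s := by
  obtain ⟨D, hD, rfl, hcard⟩ := exists_ncard_codeSupport_eq_genHammingWeight hs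
  exact hcard ▸ hΛ.mul_finrank_le_mul_ncard_codeSupport hD

end PIRMatrix

section ExampleCode

variable (F : Type*) [Field F]

/-- The `[5,3,2]` code of the example, with the same generator matrix over an arbitrary field. -/
def exampleCode : Submodule F (Fin 5 → F) :=
  Submodule.span F {![1, 0, 0, 1, 0], ![0, 1, 0, 1, 0], ![0, 0, 1, 0, 1]}

/-- The subcode of `exampleCode` spanned by the first two generators; it attains the second
generalized Hamming weight. -/
def exampleSubcode : Submodule F (Fin 5 → F) :=
  Submodule.span F {![1, 0, 0, 1, 0], ![0, 1, 0, 1, 0]}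

variable {F} in
theorem mem_exampleCode_iff {x : Fin 5 → F} :
    x ∈ exampleCode F ↔ x 3 = x 0 + x 1 ∧ x 4 = x 2 := by
  rw [exampleCode, Submodule.mem_span_triple]
  constructor
  · rintro ⟨a, b, c, rfl⟩
    simp
  · rintro ⟨h3, h4⟩
    refine ⟨x 0, x 1, x 2, ?_⟩
    ext i
    fin_cases i <;> simp [h3, h4]

variable {F} in
theorem two_le_hammingNorm_of_mem_exampleCode [DecidableEq F] {x : Fin 5 → F}
    (hx : x ∈ exampleCode F) (hx_ne : x ≠ 0) : 2 ≤ hammingNorm x := by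
  obtain ⟨h3, h4⟩ := mem_exampleCode_iff.1 hx
  have two_le {i j : Fin 5} (hij : i ≠ j) (hi : x i ≠ 0) (hj : x j ≠ 0) : 2 ≤ hammingNorm x :=
    Finset.one_lt_card.2 ⟨i, by simpa using hi, j, by simpa using hj, hij⟩
  by_cases hx2 : x 2 = 0
  · by_cases hx0 : x 0 = 0
    · have hx1 : x 1 ≠ 0 := by
        intro hx1
        refine hx_ne (funext fun i => ?_)
        fin_cases i <;> simp [*]
      exact two_le (i := 1) (j := 3) (by decide) hx1 (by simpa [h3, hx0] using hx1)
    · by_cases hx1 : x 1 = 0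
      · exact two_le (i := 0) (j := 3) (by decide) hx0 (by simpa [h3, hx1] using hx0)
      · exact two_le (i := 0) (j := 1) (by decide) hx0 hx1
  · exact two_le (i := 2) (j := 4) (by decide) hx2 (h4 ▸ hx2)

theorem exampleSubcode_le_exampleCode : exampleSubcode F ≤ exampleCode F :=
  Submodule.span_mono (Set.insert_subset_insert (Set.singleton_subset_iff.2 (Set.mem_insert _ _)))

theorem finrank_exampleSubcode : Module.finrank F (exampleSubcode F) = 2 := by
  have generators_independent :
      LinearIndependent F ![(![1, 0, 0, 1, 0] : Fin 5 → F), ![0, 1, 0, 1, 0]] := by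
    refine LinearIndependent.pair_iff.2 fun a b hab => ⟨?_, ?_⟩
    · simpa using congrFun hab 0
    · simpa using congrFun hab 1
  have := finrank_span_eq_card generators_independent
  rwa [Matrix.range_cons_cons_empty, Fintype.card_fin] at this

theorem two_le_finrank_exampleCode : 2 ≤ Module.finrank F (exampleCode F) :=
  (finrank_exampleSubcode F).ge.trans (Submodule.finrank_mono (exampleSubcode_le_exampleCode F))

theorem ncard_codeSupport_exampleSubcode_le : (codeSupport (exampleSubcode F)).ncard ≤ 3 := by
  have hsub : codeSupport (exampleSubcode F) ⊆ (({0, 1, 3} : Finset (Fin 5)) : Set (Fin 5)) := by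
    refine codeSupport_span_subset ?_
    rintro x (rfl | rfl) j hj <;> revert hj <;> fin_cases j <;> simp
  calc (codeSupport (exampleSubcode F)).ncard
      ≤ (({0, 1, 3} : Finset (Fin 5)) : Set (Fin 5)).ncard := Set.ncard_le_ncard hsub
    _ = 3 := Set.ncard_coe_finset _

theorem genHammingWeight_exampleCode_two : genHammingWeight (exampleCode F) 2 = 3 := by
  classical
  have exampleCode_ne_bot : exampleCode F ≠ ⊥ :=
    Submodule.one_le_finrank_iff.1 (one_le_two.trans (two_le_finrank_exampleCode F))
  refine le_antisymm ?_ ?_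
  · calc genHammingWeight (exampleCode F) 2
        ≤ (codeSupport (exampleSubcode F)).ncard :=
          finrank_exampleSubcode F ▸
            genHammingWeight_le_ncard_codeSupport (exampleSubcode_le_exampleCode F)
      _ ≤ 3 := ncard_codeSupport_exampleSubcode_le F
  · calc 2 ≤ genHammingWeight (exampleCode F) 1 :=
          le_genHammingWeight_one exampleCode_ne_bot fun _ => two_le_hammingNorm_of_mem_exampleCode
      _ < genHammingWeight (exampleCode F) 2 :=
          genHammingWeight_lt_succ (two_le_finrank_exampleCode F)

end ExampleCode

theorem example_n5k3_not_capacity_achieving_general (F : Type*) [Field F] :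
    genHammingWeight (exampleCode F) 2 = 3 ∧
    ∀ (k ν κ : ℕ) (Λ : Fin ν → Fin 5 → Bool),
      IsPIRMatrix (exampleCode F) k κ Λ → 2 * ν ≤ 3 * κ := by
  refine ⟨genHammingWeight_exampleCode_two F, fun k ν κ Λ hΛ => ?_⟩
  have weight_bound := hΛ.mul_le_mul_genHammingWeight (two_le_finrank_exampleCode F)
  rw [genHammingWeight_exampleCode_two] at weight_bound
  linarith

/-- the binary `[5,3,2]` code spanned by `(1,0,0,1,0)`, `(0,1,0,1,0)`,
`(0,0,1,0,1)` has `d_2 = 3 < (5/3)·2`, hence no PIR achievable rate matrix with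
`κ/ν = 3/5` exists for it. -/
theorem example_n5k3_not_capacity_achieving :
    genHammingWeight
      (Submodule.span (ZMod 2)
        {![1, 0, 0, 1, 0], ![0, 1, 0, 1, 0], ![0, 0, 1, 0, 1]}) 2 = 3 ∧
    (3 : ℚ) < (5 / 3) * 2 ∧
    ¬∃ (ν κ : ℕ) (Λ : Fin ν → Fin 5 → Bool), 0 < ν ∧
      IsPIRMatrix (Submodule.span (ZMod 2)
        {![1, 0, 0, 1, 0], ![0, 1, 0, 1, 0], ![0, 0, 1, 0, 1]}) 3 κ Λ ∧
      κ * 5 = 3 * ν := by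
  obtain ⟨weight_eq, rate_bound⟩ := example_n5k3_not_capacity_achieving_general (ZMod 2)
  exact ⟨weight_eq, by norm_num, fun ⟨ν, κ, Λ, hν, hΛ, hκ⟩ => by
    linarith [rate_bound 3 ν κ Λ hΛ]⟩
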